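/- Periodic minimum problem, small domains, intermediate volume fraction: let τ ∈ (0,1), 0 < L ≤ min{τ, 1−τ} and L ≤ σ ≤ 1−L. Then 2L + 2·min{σ, 1−σ, τ, 1−τ} is the least element of the set of values E^{#}_τ(v) as v ranges over Adm(L,σ): every v ∈ Adm(L,σ) satisfies E^{#}_τ(v) ≥ 2L + 2·min{σ, 1−σ, τ, 1−τ}, and the constant function v ≡ σ attains this value. -/

import Mathlib

open MeasureTheory Filter Set

noncomputable section

/-- `Adm L σ v` : `v` is admissible, i.e. `0 ≤ v ≤ 1` on `(0,L)`, `v` has finite pointwise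
total variation on `(0,L)` and `∫_{(0,L)} v = σL`. -/
def Adm (L σ : ℝ) (v : ℝ → ℝ) : Prop :=
  (∀ x ∈ Set.Ioo 0 L, 0 ≤ v x ∧ v x ≤ 1) ∧
  BoundedVariationOn v (Set.Ioo 0 L) ∧
  (∫ x in Set.Ioo 0 L, v x) = σ * L

/-- The interior part of the limit functional:
`2·λ({x ∈ (0,L) : 0 < v(x) < 1}) + Var(v;(0,L))`. -/
def Fvol (L : ℝ) (v : ℝ → ℝ) : ℝ :=
  2 * (volume {x ∈ Set.Ioo 0 L | 0 < v x ∧ v x < 1}).toReal +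
    (eVariationOn v (Set.Ioo 0 L)).toReal

/-- The boundary term `φ_τ(x,y) = λ( [0,1] ∩ ( ([−τ,x−τ] ∪ [1−τ,x+1−τ]) Δ [0,y] ) )`. -/
def phi (τ x y : ℝ) : ℝ :=
  (volume (Set.Icc (0 : ℝ) 1 ∩
    symmDiff (Set.Icc (-τ) (x - τ) ∪ Set.Icc (1 - τ) (x + 1 - τ)) (Set.Icc 0 y))).toReal

/-!
Let `S` be the set where `0 < v < 1`, `ℓ` its measure and `2K = Var(v) + φ_τ(a, b)`; the claim is
`L + min {σ, 1 - σ, τ, 1 - τ} ≤ ℓ + K`.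

The boundary term is the measure of the symmetric difference of the arc `[-τ, x - τ]` (modulo `1`)
and the arc `[0, y]`, so it satisfies a triangle inequality and dominates `|x - y|`. Going round the
circle, from `v(0⁺)` to `v(L⁻)` through the values of `v` and back through the boundary term, gives
`2 |v x - v y| ≤ 2K`, and `φ_τ(c, c) ≤ 2K` for every `c` between two values of `v`.

If `S` is the whole interval, then `ℓ = L` and the second inequality applies to the mean `c = σ`,
where `φ_τ(σ, σ) = 2 min {σ, 1 - σ, τ, 1 - τ}`. Otherwise `v` takes the value `0` or `1`; up to
exchanging `v` and `1 - v` it takes the value `0`, so `v ≤ K`. If `v` also takes the value `1`, then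
`K ≥ 1 ≥ L + min {σ, 1 - σ}`. If not, `v` vanishes off `S`, hence `σ L ≤ K ℓ`, and
`ℓ ≤ L ≤ σ` forces `L + σ ≤ ℓ + K`.
-/

open scoped symmDiff Topology

section Variation

variable {α : Type*} [LinearOrder α] {s : Set α} {x y : α} {l₁ l₂ : Filter α}

lemma eVariationOn_const {E : Type*} [PseudoEMetricSpace E] (s : Set α) (c : E) :
    eVariationOn (fun _ ↦ c) s = 0 :=
  eVariationOn.constant_on <|
    subsingleton_singleton.anti <| image_subset_iff.2 fun _ _ ↦ mem_singleton c

lemma edist_le_eVariationOn_of_tendsto {E : Type*} [PseudoEMetricSpace E] {f : α → E} {a : E}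
    {l : Filter α} [l.NeBot] (ha : Tendsto f l (𝓝 a)) (hs : s ∈ l) (hx : x ∈ s) :
    edist a (f x) ≤ eVariationOn f s :=
  le_of_tendsto (ha.edist tendsto_const_nhds) <|
    mem_of_superset hs fun _ ht ↦ eVariationOn.edist_le f ht hx

lemma edist_add_edist_add_edist_le_eVariationOn {E : Type*} [PseudoEMetricSpace E] {f : α → E}
    {a b : E} [l₁.NeBot] [l₂.NeBot] (ha : Tendsto f l₁ (𝓝 a)) (hb : Tendsto f l₂ (𝓝 b))
    (hx : x ∈ s) (hy : y ∈ s) (hxy : x ≤ y) (h₁ : s ∩ Iic x ∈ l₁) (h₂ : s ∩ Ici y ∈ l₂) :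
    edist a (f x) + edist (f x) (f y) + edist (f y) b ≤ eVariationOn f s := by
  have hleft : edist a (f x) ≤ eVariationOn f (s ∩ Iic x) :=
    edist_le_eVariationOn_of_tendsto ha h₁ ⟨hx, le_rfl⟩
  have hmid : edist (f x) (f y) ≤ eVariationOn f (s ∩ Icc x y) :=
    eVariationOn.edist_le f ⟨hx, le_rfl, hxy⟩ ⟨hy, hxy, le_rfl⟩
  have hright : edist (f y) b ≤ eVariationOn f (s ∩ Ici y) :=
    edist_comm b (f y) ▸ edist_le_eVariationOn_of_tendsto hb h₂ ⟨hy, le_rfl⟩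
  calc edist a (f x) + edist (f x) (f y) + edist (f y) b
      ≤ eVariationOn f (s ∩ Iic x) + eVariationOn f (s ∩ Icc x y) + eVariationOn f (s ∩ Ici y) := by
        gcongr
    _ ≤ eVariationOn f (s ∩ Iic x ∪ s ∩ Icc x y) + eVariationOn f (s ∩ Ici y) := by
        gcongr
        exact eVariationOn.add_le_union f fun _ hp _ hq ↦ le_trans hp.2 hq.2.1
    _ ≤ eVariationOn f (s ∩ Iic x ∪ s ∩ Icc x y ∪ s ∩ Ici y) :=
        eVariationOn.add_le_union f fun _ hp _ hq ↦
          le_trans (hp.elim (fun h ↦ le_trans h.2 hxy) fun h ↦ h.2.2) hq.2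
    _ ≤ eVariationOn f s := eVariationOn.mono f <|
        union_subset (union_subset inter_subset_left inter_subset_left) inter_subset_left

lemma dist_add_dist_add_dist_le_toReal_eVariationOn {E : Type*} [PseudoMetricSpace E] {f : α → E}
    {a b : E} (hf : BoundedVariationOn f s) [l₁.NeBot] [l₂.NeBot] (ha : Tendsto f l₁ (𝓝 a))
    (hb : Tendsto f l₂ (𝓝 b)) (hx : x ∈ s) (hy : y ∈ s) (hxy : x ≤ y) (h₁ : s ∩ Iic x ∈ l₁)
    (h₂ : s ∩ Ici y ∈ l₂) :
    dist a (f x) + dist (f x) (f y) + dist (f y) b ≤ (eVariationOn f s).toReal := by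
  rw [← ENNReal.ofReal_le_iff_le_toReal hf, ENNReal.ofReal_add (by positivity) dist_nonneg,
    ENNReal.ofReal_add dist_nonneg dist_nonneg]
  simpa only [edist_dist] using
    edist_add_edist_add_edist_le_eVariationOn ha hb hx hy hxy h₁ h₂

end Variation

/- `(L - ℓ) * (σ - ℓ) ≥ 0` says that the convex function `ℓ ↦ ℓ + σ * L / ℓ` is at least its value
`L + σ` at the endpoint `ℓ = L`. -/
lemma add_le_add_of_mul_le_mul {R : Type*} [CommRing R] [LinearOrder R] [IsStrictOrderedRing R]
    {L σ ℓ K : R} (hL : 0 < L) (hLσ : L ≤ σ) (hℓ0 : 0 ≤ ℓ) (hℓ : ℓ ≤ L) (h : σ * L ≤ K * ℓ) :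
    L + σ ≤ ℓ + K := by
  have hℓpos : 0 < ℓ := by
    refine hℓ0.lt_of_ne fun h0 ↦ ?_
    rw [← h0, mul_zero] at h
    exact (mul_pos (hL.trans_le hLσ) hL).not_ge h
  have hprod : 0 ≤ (L - ℓ) * (σ - ℓ) := mul_nonneg (by linarith) (by linarith)
  refine le_of_mul_le_mul_right ?_ hℓpos
  linarith

section Measure

variable {α : Type*} [MeasurableSpace α] {μ : Measure α} {s t : Set α}

lemma measureReal_symmDiff_eq_add_sub_two_mul_inter (hs : MeasurableSet s) (ht : MeasurableSet t)
    (hs' : μ s ≠ ⊤) (ht' : μ t ≠ ⊤) :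
    μ.real (s ∆ t) = μ.real s + μ.real t - 2 * μ.real (s ∩ t) := by
  have hst := measureReal_inter_add_sdiff (μ := μ) (s := s) ht hs'
  have hts := measureReal_inter_add_sdiff (μ := μ) (s := t) hs ht'
  rw [inter_comm] at hts
  rw [measureReal_symmDiff_eq hs ht hs' ht']
  linarith

lemma abs_measureReal_sub_le_measureReal_symmDiff (hs : MeasurableSet s) (ht : MeasurableSet t)
    (hs' : μ s ≠ ⊤) (ht' : μ t ≠ ⊤) : |μ.real s - μ.real t| ≤ μ.real (s ∆ t) := by
  have hleft : μ.real (s ∩ t) ≤ μ.real s := measureReal_mono inter_subset_left hs'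
  have hright : μ.real (s ∩ t) ≤ μ.real t := measureReal_mono inter_subset_right ht'
  rw [measureReal_symmDiff_eq_add_sub_two_mul_inter hs ht hs' ht', abs_le]
  constructor <;> linarith

lemma measureReal_symmDiff_eq_abs_sub (hs : MeasurableSet s) (ht : MeasurableSet t)
    (hs' : μ s ≠ ⊤) (ht' : μ t ≠ ⊤) (h : s ⊆ t ∨ t ⊆ s) :
    μ.real (s ∆ t) = |μ.real s - μ.real t| := by
  wlog hst : s ⊆ t generalizing s t
  · rw [symmDiff_comm, abs_sub_comm, this ht hs ht' hs' h.symm (h.resolve_left hst)]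
  rw [measureReal_symmDiff_eq_add_sub_two_mul_inter hs ht hs' ht', inter_eq_left.2 hst,
    abs_sub_comm, abs_of_nonneg (sub_nonneg.2 (measureReal_mono hst ht'))]
  ring

lemma setIntegral_le_mul_measureReal_of_forall_sdiff_eq_zero {w : α → ℝ} {K : ℝ} (hts : t ⊆ s)
    (hs : NullMeasurableSet s μ) (hs' : μ s ≠ ⊤) (hw : IntegrableOn w s μ)
    (hK : ∀ x ∈ s, w x ≤ K) (h0 : ∀ x ∈ s \ t, w x = 0) :
    ∫ x in s, w x ∂μ ≤ K * μ.real t :=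
  calc ∫ x in s, w x ∂μ = ∫ x in t, w x ∂μ :=
        setIntegral_eq_of_subset_of_ae_sdiff_eq_zero hs hts (ae_of_all μ h0)
    _ ≤ ∫ _ in t, K ∂μ :=
        integral_mono_ae (hw.mono_set hts)
          (integrableOn_const (measure_ne_top_of_subset hts hs'))
          (ae_restrict_of_ae_restrict_of_subset hts ((ae_restrict_mem₀ hs).mono hK))
    _ = K * μ.real t := by rw [setIntegral_const, smul_eq_mul, mul_comm]

lemma min_one_add_le_measureReal_add {w : α → ℝ} {σ K : ℝ} (hs : NullMeasurableSet s μ)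
    (hs0 : μ s ≠ 0) (hs' : μ s ≠ ⊤) (hw : IntegrableOn w s μ) (hw01 : ∀ x ∈ s, w x ∈ Icc (0 : ℝ) 1)
    (hK : ∀ x ∈ s, w x ≤ K) (hint : ∫ x in s, w x ∂μ = σ * μ.real s) (hσ : μ.real s ≤ σ) :
    min 1 (μ.real s + σ) ≤ μ.real {x ∈ s | w x ∈ Ioo (0 : ℝ) 1} + K := by
  by_cases hone : ∃ x ∈ s, w x = 1
  · obtain ⟨x, hx, hx1⟩ := hone
    calc min 1 (μ.real s + σ) ≤ 1 := min_le_left _ _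
      _ ≤ K := hx1 ▸ hK x hx
      _ ≤ _ := le_add_of_nonneg_left measureReal_nonneg
  · push Not at hone
    have hzero : ∀ x ∈ s \ {x ∈ s | w x ∈ Ioo (0 : ℝ) 1}, w x = 0 := fun x ⟨hx, hxS⟩ ↦ by
      by_contra h0
      exact hxS ⟨hx, (hw01 x hx).1.lt_of_ne' h0, (hw01 x hx).2.lt_of_ne (hone x hx)⟩
    have hmass :=
      setIntegral_le_mul_measureReal_of_forall_sdiff_eq_zero (sep_subset s _) hs hs' hw hK hzero
    rw [hint] at hmass
    exact (min_le_right _ _).trans <| add_le_add_of_mul_le_mul (ENNReal.toReal_pos hs0 hs') hσ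
      measureReal_nonneg (measureReal_mono (sep_subset s _) hs') hmass

lemma measureReal_add_min_le_measureReal_add {w : α → ℝ} {σ K : ℝ} (hs : NullMeasurableSet s μ)
    (hs0 : μ s ≠ 0) (hs' : μ s ≠ ⊤) (hw : IntegrableOn w s μ) (hw01 : ∀ x ∈ s, w x ∈ Icc (0 : ℝ) 1)
    (hosc : ∀ x ∈ s, ∀ y ∈ s, |w x - w y| ≤ K) (hint : ∫ x in s, w x ∂μ = σ * μ.real s)
    (hσ : μ.real s ≤ σ) (hσ' : σ ≤ 1 - μ.real s) {z : α} (hz : z ∈ s) (hwz : w z ∉ Ioo (0 : ℝ) 1) :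
    μ.real s + min σ (1 - σ) ≤ μ.real {x ∈ s | w x ∈ Ioo (0 : ℝ) 1} + K := by
  wlog hz0 : w z = 0 generalizing w σ
  · have hz1 : 1 - w z = 0 := by
      by_contra h
      exact hwz ⟨(hw01 z hz).1.lt_of_ne' hz0, (hw01 z hz).2.lt_of_ne' (sub_ne_zero.1 h)⟩
    have hone : IntegrableOn (fun _ ↦ (1 : ℝ)) s μ := integrableOn_const hs'
    have hint' : ∫ x in s, (1 - w x) ∂μ = (1 - σ) * μ.real s := by
      rw [integral_sub hone hw, hint, setIntegral_const, smul_eq_mul]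
      ring
    have hmem (r : ℝ) : 1 - r ∈ Ioo (0 : ℝ) 1 ↔ r ∈ Ioo (0 : ℝ) 1 := by
      rw [Set.sub_mem_Ioo_iff_right, sub_self, sub_zero]
    have hrefl := this (w := fun x ↦ 1 - w x) (hone.sub hw)
      (fun x hx ↦ ⟨sub_nonneg.2 (hw01 x hx).2, sub_le_self 1 (hw01 x hx).1⟩)
      (fun x hx y hy ↦ by simpa only [sub_sub_sub_cancel_left] using hosc y hy x hx)
      hint' (by linarith) (by linarith) (by rwa [hmem]) hz1
    simpa only [sub_sub_cancel, min_comm, hmem] using hrefl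
  have hK : ∀ x ∈ s, w x ≤ K := fun x hx ↦ by
    simpa only [hz0, sub_zero] using (le_abs_self _).trans (hosc x hx z hz)
  calc μ.real s + min σ (1 - σ) ≤ min 1 (μ.real s + σ) :=
        le_min (by linarith [min_le_right σ (1 - σ)]) (by linarith [min_le_left σ (1 - σ)])
    _ ≤ _ := min_one_add_le_measureReal_add hs hs0 hs' hw hw01 hK hint hσ

lemma exists_mem_uIcc_of_setIntegral_eq_mul {w : α → ℝ} {σ : ℝ} (hs0 : μ s ≠ 0) (hs' : μ s ≠ ⊤)
    (hw : IntegrableOn w s μ) (hint : ∫ x in s, w x ∂μ = σ * μ.real s) :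
    ∃ x ∈ s, ∃ y ∈ s, σ ∈ uIcc (w x) (w y) := by
  have haverage : ⨍ x in s, w x ∂μ = σ := by
    have hpos : 0 < μ.real s := ENNReal.toReal_pos hs0 hs'
    rw [setAverage_eq, hint, smul_eq_mul, mul_comm σ, inv_mul_cancel_left₀ hpos.ne']
  obtain ⟨x, hx, hxσ⟩ := exists_le_setAverage hs0 hs' hw
  obtain ⟨y, hy, hyσ⟩ := exists_setAverage_le hs0 hs' hw
  exact ⟨x, hx, y, hy, mem_uIcc_of_le (haverage ▸ hxσ) (haverage ▸ hyσ)⟩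

end Measure

section BoundaryTerm

variable {τ x x' y y' : ℝ}

lemma volume_real_Icc_union_Icc {a b c d : ℝ} (hbc : b ≤ c) :
    volume.real (Icc a b ∪ Icc c d) = max (b - a) 0 + max (d - c) 0 := by
  have hdisj : AEDisjoint volume (Icc a b) (Icc c d) := by
    rw [AEDisjoint, Icc_inter_Icc, Real.volume_Icc, ENNReal.ofReal_eq_zero, sub_nonpos]
    exact (min_le_left b d).trans (hbc.trans (le_max_right a c))
  rw [measureReal_union₀ measurableSet_Icc.nullMeasurableSet hdisj measure_Icc_lt_top.ne
    measure_Icc_lt_top.ne, Real.volume_real_Icc, Real.volume_real_Icc]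

/-- The arc `[-τ, x - τ]` of the circle `ℝ / ℤ`, represented as a subset of `[0, 1]` by means of the
translates by `0` and `1`. -/
def shiftedArc (τ x : ℝ) : Set ℝ :=
  Icc 0 1 ∩ (Icc (-τ) (x - τ) ∪ Icc (1 - τ) (x + 1 - τ))

lemma measurableSet_shiftedArc : MeasurableSet (shiftedArc τ x) :=
  measurableSet_Icc.inter (measurableSet_Icc.union measurableSet_Icc)

lemma shiftedArc_subset_Icc : shiftedArc τ x ⊆ Icc 0 1 := inter_subset_left

lemma volume_shiftedArc_ne_top : volume (shiftedArc τ x) ≠ ⊤ :=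
  measure_ne_top_of_subset shiftedArc_subset_Icc measure_Icc_lt_top.ne

lemma shiftedArc_subset_shiftedArc (h : x ≤ x') : shiftedArc τ x ⊆ shiftedArc τ x' := by
  unfold shiftedArc
  gcongr

lemma phi_eq_volume_real_symmDiff (hy : y ≤ 1) :
    phi τ x y = volume.real (shiftedArc τ x ∆ Icc 0 y) := by
  have hIcc : Icc (0 : ℝ) 1 ∩ Icc 0 y = Icc 0 y := inter_eq_right.2 (Icc_subset_Icc_right hy)
  rw [phi, inter_symmDiff_distrib_left, hIcc]
  rfl

lemma volume_real_shiftedArc_inter_Icc (hτ : τ ∈ Icc (0 : ℝ) 1) (hx : x ≤ 1) (hy : y ≤ 1) :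
    volume.real (shiftedArc τ x ∩ Icc 0 y) =
      max (min (x - τ) y) 0 + max (min (x + 1 - τ) y - (1 - τ)) 0 := by
  have hunion : shiftedArc τ x ∩ Icc 0 y =
      Icc 0 (min (x - τ) y) ∪ Icc (1 - τ) (min (x + 1 - τ) y) := by
    ext z
    simp only [shiftedArc, mem_inter_iff, mem_union, mem_Icc, le_min_iff] at hτ ⊢
    grind
  rw [hunion, volume_real_Icc_union_Icc ((min_le_left _ _).trans (by linarith)), sub_zero]

lemma volume_real_shiftedArc (hτ : τ ∈ Icc (0 : ℝ) 1) (hx : x ∈ Icc (0 : ℝ) 1) :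
    volume.real (shiftedArc τ x) = x := by
  rw [← inter_eq_left.2 shiftedArc_subset_Icc, volume_real_shiftedArc_inter_Icc hτ hx.2 le_rfl]
  grind

lemma phi_le_abs_sub_add_phi_add_abs_sub (hτ : τ ∈ Icc (0 : ℝ) 1) (hx : x ∈ Icc (0 : ℝ) 1)
    (hx' : x' ∈ Icc (0 : ℝ) 1) (hy : y ∈ Icc (0 : ℝ) 1) (hy' : y' ∈ Icc (0 : ℝ) 1) :
    phi τ x' y' ≤ |x - x'| + phi τ x y + |y - y'| := by
  have hshift : volume.real (shiftedArc τ x' ∆ shiftedArc τ x) = |x - x'| := by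
    rw [measureReal_symmDiff_eq_abs_sub measurableSet_shiftedArc measurableSet_shiftedArc
      volume_shiftedArc_ne_top volume_shiftedArc_ne_top
      ((le_total x' x).imp shiftedArc_subset_shiftedArc shiftedArc_subset_shiftedArc),
      volume_real_shiftedArc hτ hx, volume_real_shiftedArc hτ hx', abs_sub_comm]
  have hIcc : volume.real (Icc 0 y ∆ Icc 0 y') = |y - y'| := by
    rw [measureReal_symmDiff_eq_abs_sub measurableSet_Icc measurableSet_Icc
      measure_Icc_lt_top.ne measure_Icc_lt_top.ne
      ((le_total y y').imp Icc_subset_Icc_right Icc_subset_Icc_right),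
      Real.volume_real_Icc_of_le hy.1, Real.volume_real_Icc_of_le hy'.1, sub_zero, sub_zero]
  rw [phi_eq_volume_real_symmDiff hy.2, phi_eq_volume_real_symmDiff hy'.2, ← hshift, ← hIcc]
  calc volume.real (shiftedArc τ x' ∆ Icc 0 y')
      ≤ volume.real (shiftedArc τ x' ∆ Icc 0 y) + volume.real (Icc 0 y ∆ Icc 0 y') :=
        measureReal_symmDiff_le _ volume_shiftedArc_ne_top measure_Icc_lt_top.ne
    _ ≤ volume.real (shiftedArc τ x' ∆ shiftedArc τ x) + volume.real (shiftedArc τ x ∆ Icc 0 y) +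
          volume.real (Icc 0 y ∆ Icc 0 y') := by
        gcongr
        exact measureReal_symmDiff_le _ volume_shiftedArc_ne_top volume_shiftedArc_ne_top

lemma abs_sub_le_phi (hτ : τ ∈ Icc (0 : ℝ) 1) (hx : x ∈ Icc (0 : ℝ) 1) (hy : y ∈ Icc (0 : ℝ) 1) :
    |x - y| ≤ phi τ x y := by
  have h := abs_measureReal_sub_le_measureReal_symmDiff (μ := volume)
    (measurableSet_shiftedArc (τ := τ) (x := x)) (measurableSet_Icc (a := 0) (b := y))
    volume_shiftedArc_ne_top measure_Icc_lt_top.ne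
  rwa [volume_real_shiftedArc hτ hx, Real.volume_real_Icc_of_le hy.1, sub_zero,
    ← phi_eq_volume_real_symmDiff hy.2] at h

lemma phi_self (hτ : τ ∈ Icc (0 : ℝ) 1) (hx : x ∈ Icc (0 : ℝ) 1) :
    phi τ x x = 2 * min (min x (1 - x)) (min τ (1 - τ)) := by
  have hoverlap : volume.real (shiftedArc τ x ∩ Icc 0 x) = max (x - τ) 0 + max (x - (1 - τ)) 0 := by
    rw [volume_real_shiftedArc_inter_Icc hτ hx.2 hx.2, min_eq_left (by linarith [hτ.1]),
      min_eq_right (by linarith [hτ.2])]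
  rw [phi_eq_volume_real_symmDiff hx.2, measureReal_symmDiff_eq_add_sub_two_mul_inter
      measurableSet_shiftedArc measurableSet_Icc volume_shiftedArc_ne_top measure_Icc_lt_top.ne,
    volume_real_shiftedArc hτ hx, Real.volume_real_Icc_of_le hx.1, hoverlap]
  grind

end BoundaryTerm

namespace Adm

variable {L σ τ a b p q x y c : ℝ} {v : ℝ → ℝ}

lemma mem_Icc_of_tendsto (hv : Adm L σ v) {l : Filter ℝ} [l.NeBot] (hl : Ioo 0 L ∈ l)
    (ha : Tendsto v l (𝓝 a)) : a ∈ Icc (0 : ℝ) 1 :=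
  isClosed_Icc.mem_of_tendsto ha (mem_of_superset hl hv.1)

lemma integrableOn (hv : Adm L σ v) (hσ : σ ≠ 0) (hL : L ≠ 0) : IntegrableOn v (Ioo 0 L) :=
  .of_integral_ne_zero (hv.2.2 ▸ mul_ne_zero hσ hL)

lemma phi_add_abs_sub_le (hv : Adm L σ v) (hτ : τ ∈ Icc (0 : ℝ) 1)
    (ha : Tendsto v (𝓝[Ioo 0 L] 0) (𝓝 a)) (hb : Tendsto v (𝓝[Ioo 0 L] L) (𝓝 b))
    (hx : x ∈ Ioo 0 L) (hy : y ∈ Ioo 0 L) (hxy : x ≤ y)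
    (hp : p ∈ Icc (0 : ℝ) 1) (hq : q ∈ Icc (0 : ℝ) 1) :
    phi τ p q + |v x - v y| ≤
      (eVariationOn v (Ioo 0 L)).toReal + phi τ a b + |v x - p| + |v y - q| := by
  have hL : 0 < L := hx.1.trans hx.2
  have := left_nhdsWithin_Ioo_neBot hL
  have := right_nhdsWithin_Ioo_neBot hL
  have hphi := phi_le_abs_sub_add_phi_add_abs_sub hτ (hv.mem_Icc_of_tendsto self_mem_nhdsWithin ha)
    hp (hv.mem_Icc_of_tendsto self_mem_nhdsWithin hb) hq
  have hvar : |a - v x| + |v x - v y| + |v y - b| ≤ (eVariationOn v (Ioo 0 L)).toReal :=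
    dist_add_dist_add_dist_le_toReal_eVariationOn hv.2.1 ha hb hx hy hxy
      (inter_mem_nhdsWithin _ (Iic_mem_nhds hx.1)) (inter_mem_nhdsWithin _ (Ici_mem_nhds hy.2))
  linarith [abs_sub_le a (v x) p, abs_sub_le b (v y) q, abs_sub_comm b (v y)]

lemma two_mul_abs_sub_le (hv : Adm L σ v) (hτ : τ ∈ Icc (0 : ℝ) 1)
    (ha : Tendsto v (𝓝[Ioo 0 L] 0) (𝓝 a)) (hb : Tendsto v (𝓝[Ioo 0 L] L) (𝓝 b))
    (hx : x ∈ Ioo 0 L) (hy : y ∈ Ioo 0 L) :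
    2 * |v x - v y| ≤ (eVariationOn v (Ioo 0 L)).toReal + phi τ a b := by
  wlog hxy : x ≤ y generalizing x y
  · rw [abs_sub_comm]
    exact this hy hx (le_of_not_ge hxy)
  have hphi := hv.phi_add_abs_sub_le hτ ha hb hx hy hxy (hv.1 x hx) (hv.1 y hy)
  rw [sub_self, sub_self, abs_zero, add_zero, add_zero] at hphi
  linarith [abs_sub_le_phi hτ (hv.1 x hx) (hv.1 y hy)]

lemma phi_self_le (hv : Adm L σ v) (hτ : τ ∈ Icc (0 : ℝ) 1)
    (ha : Tendsto v (𝓝[Ioo 0 L] 0) (𝓝 a)) (hb : Tendsto v (𝓝[Ioo 0 L] L) (𝓝 b))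
    (hx : x ∈ Ioo 0 L) (hy : y ∈ Ioo 0 L) (hc : c ∈ uIcc (v x) (v y)) :
    phi τ c c ≤ (eVariationOn v (Ioo 0 L)).toReal + phi τ a b := by
  wlog hxy : x ≤ y generalizing x y
  · exact this hy hx (uIcc_comm (v x) (v y) ▸ hc) (le_of_not_ge hxy)
  have hc01 : c ∈ Icc (0 : ℝ) 1 := uIcc_subset_Icc (hv.1 x hx) (hv.1 y hy) hc
  have hbetween : |v x - c| + |c - v y| = |v x - v y| :=
    dist_add_dist_of_mem_segment (segment_eq_uIcc (v x) (v y) ▸ hc)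
  have hphi := hv.phi_add_abs_sub_le hτ ha hb hx hy hxy hc01 hc01
  linarith [abs_sub_comm c (v y)]

theorem le_Fvol_add_phi (hv : Adm L σ v) (hτ : τ ∈ Icc (0 : ℝ) 1) (hL : 0 < L) (hσ : L ≤ σ)
    (hσ' : σ ≤ 1 - L) (ha : Tendsto v (𝓝[Ioo 0 L] 0) (𝓝 a))
    (hb : Tendsto v (𝓝[Ioo 0 L] L) (𝓝 b)) :
    2 * L + 2 * min (min σ (1 - σ)) (min τ (1 - τ)) ≤ Fvol L v + phi τ a b := by
  have hvol : volume.real (Ioo 0 L) = L := by rw [Real.volume_real_Ioo_of_le hL.le, sub_zero]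
  have hpos : volume (Ioo 0 L) ≠ 0 := (isOpen_Ioo.measure_pos volume (nonempty_Ioo.2 hL)).ne'
  have hfin : volume (Ioo 0 L) ≠ ⊤ := measure_Ioo_lt_top.ne
  have hint : ∫ x in Ioo 0 L, v x = σ * volume.real (Ioo 0 L) := by rw [hvol, hv.2.2]
  have hvI : IntegrableOn v (Ioo 0 L) := hv.integrableOn (hL.trans_le hσ).ne' hL.ne'
  have hFvol : Fvol L v = 2 * volume.real {x ∈ Ioo 0 L | v x ∈ Ioo (0 : ℝ) 1} +
    (eVariationOn v (Ioo 0 L)).toReal := rfl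
  by_cases hmixed : ∀ x ∈ Ioo 0 L, v x ∈ Ioo (0 : ℝ) 1
  · obtain ⟨x, hx, y, hy, hσv⟩ := exists_mem_uIcc_of_setIntegral_eq_mul hpos hfin hvI hint
    have hphi := hv.phi_self_le hτ ha hb hx hy hσv
    rw [phi_self hτ ⟨by linarith, by linarith⟩] at hphi
    rw [hFvol, sep_eq_self_iff_mem_true.2 hmixed, hvol]
    linarith
  · push Not at hmixed
    obtain ⟨z, hz, hvz⟩ := hmixed
    have hosc : ∀ x ∈ Ioo 0 L, ∀ y ∈ Ioo 0 L,
        |v x - v y| ≤ ((eVariationOn v (Ioo 0 L)).toReal + phi τ a b) / 2 := fun x hx y hy ↦ by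
      linarith [hv.two_mul_abs_sub_le hτ ha hb hx hy]
    have hbound := measureReal_add_min_le_measureReal_add measurableSet_Ioo.nullMeasurableSet
      hpos hfin hvI hv.1 hosc hint (hvol.trans_le hσ) (hvol.symm ▸ hσ') hz hvz
    rw [hvol] at hbound
    linarith [min_le_left (min σ (1 - σ)) (min τ (1 - τ))]

lemma const (hσ : σ ∈ Icc (0 : ℝ) 1) (hL : 0 ≤ L) : Adm L σ fun _ ↦ σ := by
  refine ⟨fun _ _ ↦ hσ, ?_, ?_⟩
  · rw [BoundedVariationOn, eVariationOn_const]
    exact ENNReal.zero_ne_top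
  · rw [setIntegral_const, Real.volume_real_Ioo_of_le hL, sub_zero, smul_eq_mul, mul_comm]

end Adm

lemma Fvol_const {L c : ℝ} (hL : 0 ≤ L) (hc : c ∈ Ioo (0 : ℝ) 1) : Fvol L (fun _ ↦ c) = 2 * L := by
  have hmixed : {x ∈ Ioo 0 L | 0 < c ∧ c < 1} = Ioo 0 L := sep_eq_self_iff_mem_true.2 fun _ _ ↦ hc
  rw [Fvol, hmixed, eVariationOn_const, ENNReal.toReal_zero, add_zero, Real.volume_Ioo, sub_zero,
    ENNReal.toReal_ofReal hL]

theorem periodic_min_small_domain_intermediate_general (τ σ L : ℝ)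
    (hτ : τ ∈ Icc (0 : ℝ) 1) (hL0 : 0 < L)
    (hσ1 : L ≤ σ) (hσ2 : σ ≤ 1 - L) :
    (∀ v : ℝ → ℝ, ∀ a b : ℝ, Adm L σ v →
        Tendsto v (nhdsWithin 0 (Ioo 0 L)) (nhds a) →
        Tendsto v (nhdsWithin L (Ioo 0 L)) (nhds b) →
        2 * L + 2 * min (min σ (1 - σ)) (min τ (1 - τ)) ≤ Fvol L v + phi τ a b) ∧
    (Adm L σ (fun _ => σ) ∧
      Fvol L (fun _ => σ) + phi τ σ σ = 2 * L + 2 * min (min σ (1 - σ)) (min τ (1 - τ))) := by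
  have hσ : σ ∈ Ioo (0 : ℝ) 1 := ⟨by linarith, by linarith⟩
  refine ⟨fun v a b hv ha hb ↦ hv.le_Fvol_add_phi hτ hL0 hσ1 hσ2 ha hb,
    .const (Ioo_subset_Icc_self hσ) hL0.le, ?_⟩
  rw [Fvol_const hL0.le hσ, phi_self hτ (Ioo_subset_Icc_self hσ)]

/-- Periodic minimum problem in small domains with intermediate volume fraction:
for `0 < L ≤ min{τ,1−τ}` and `L ≤ σ ≤ 1−L` the least value of
`E^#_τ(v) = Fvol L v + φ_τ(v(0⁺), v(L⁻))` over `Adm(L,σ)` is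
`2L + 2·min{σ,1−σ,τ,1−τ}`, attained by the constant function `v ≡ σ`. -/
theorem periodic_min_small_domain_intermediate (τ σ L : ℝ)
    (hτ : τ ∈ Set.Ioo (0 : ℝ) 1) (hL0 : 0 < L) (hL : L ≤ min τ (1 - τ))
    (hσ1 : L ≤ σ) (hσ2 : σ ≤ 1 - L) :
    (∀ v : ℝ → ℝ, ∀ a b : ℝ, Adm L σ v →
        Tendsto v (nhdsWithin 0 (Set.Ioo 0 L)) (nhds a) →
        Tendsto v (nhdsWithin L (Set.Ioo 0 L)) (nhds b) →
        2 * L + 2 * min (min σ (1 - σ)) (min τ (1 - τ)) ≤ Fvol L v + phi τ a b) ∧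
    (Adm L σ (fun _ => σ) ∧
      Fvol L (fun _ => σ) + phi τ σ σ = 2 * L + 2 * min (min σ (1 - σ)) (min τ (1 - τ))) :=
  periodic_min_small_domain_intermediate_general τ σ L (Ioo_subset_Icc_self hτ) hL0 hσ1 hσ2
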